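/- arXiv:1711.04491 — 3 statements merged into one kernel-verified Lean document; each statement's English description precedes it below -/
import Mathlib

section
/- Let β ∈ (0, 1/2] and α be reals with 1−β < α < 1, and define s(x) := (βx − (α−(1−β)))/(1−β). Then the function x ↦ x^{−3/2} (1−x)^{−1/2} √( s(x)/(1−s(x)) ) is integrable on the open interval ((α−(1−β))/β, 1), and its integral c(α,β) satisfies 0 < c(α,β) ≤ 2 √( (1−α)/(α−(1−β)) ) · √( s(1)/(1−s(1)) ) < ∞. -/
/-!
On the interval `(a, 1)`, `a = (α - (1 - β)) / β`, the affine function `s` increases from `0` to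
`s(1) < 1`, so `0 < √(s / (1 - s)) ≤ √(s(1) / (1 - s(1)))`. The integrand is therefore positive and
dominated by a constant multiple of the weight `x ^ (-3/2) * (1 - x) ^ (-1/2)`. That weight has the
primitive `-2 √((1 - x) / x)`, continuous on `[a, 1]`; being nonnegative it is integrable, with
integral `2 √((1 - a) / a)` (`integrableOn_weight`, `integral_weight`), and
`(1 - a) / a = (1 - α) / (α - (1 - β))`.
-/

open Filter Real MeasureTheory

/-- `s(x)` from Theorem 2 of the paper. -/
noncomputable def sFun (α β x : ℝ) : ℝ := (β * x - (α - (1 - β))) / (1 - β)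

/-- The integrand defining `c(α,β)`. -/
noncomputable def cIntegrand (α β x : ℝ) : ℝ :=
  x ^ (-(3 : ℝ) / 2) * (1 - x) ^ (-(1 : ℝ) / 2) *
    Real.sqrt (sFun α β x / (1 - sFun α β x))

/-- Primitive of the weight `x ^ (-3/2) * (1 - x) ^ (-1/2)`, namely `-2 √((1 - x) / x)` written with
real powers. -/
noncomputable def weightPrimitive (x : ℝ) : ℝ :=
  -2 * ((1 - x) ^ ((1 : ℝ) / 2) * x ^ (-(1 : ℝ) / 2))

lemma hasDerivAt_weightPrimitive {x : ℝ} (hx0 : 0 < x) (hx1 : x < 1) :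
    HasDerivAt weightPrimitive (x ^ (-(3 : ℝ) / 2) * (1 - x) ^ (-(1 : ℝ) / 2)) x := by
  have hy : 0 < 1 - x := sub_pos.2 hx1
  have h1 := ((hasDerivAt_id x).const_sub 1).rpow_const (p := (1 : ℝ) / 2) (Or.inl hy.ne')
  have h2 := (hasDerivAt_id x).rpow_const (p := -(1 : ℝ) / 2) (Or.inl hx0.ne')
  refine ((h1.mul h2).const_mul (-2)).congr_deriv ?_
  have e1 : (1 - x) ^ ((1 : ℝ) / 2) = (1 - x) * (1 - x) ^ (-(1 : ℝ) / 2) := by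
    rw [← rpow_one_add' hy.le (by norm_num)]; norm_num
  have e2 : x ^ (-(1 : ℝ) / 2) = x * x ^ (-(3 : ℝ) / 2) := by
    rw [← rpow_one_add' hx0.le (by norm_num)]; norm_num
  have e3 : (1 : ℝ) / 2 - 1 = -1 / 2 := by norm_num
  have e4 : -(1 : ℝ) / 2 - 1 = -3 / 2 := by norm_num
  simp only [id, e3, e4]
  rw [e1, e2]
  ring

lemma continuousOn_weightPrimitive {a : ℝ} (ha : 0 < a) :
    ContinuousOn weightPrimitive (Set.Icc a 1) := by
  refine continuousOn_const.mul (ContinuousOn.mul ?_ ?_)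
  · exact (continuousOn_const.sub continuousOn_id).rpow_const fun _ _ => Or.inr (by norm_num)
  · exact continuousOn_id.rpow_const fun x hx => Or.inl (ha.trans_le hx.1).ne'

lemma weightPrimitive_one : weightPrimitive 1 = 0 := by
  simp [weightPrimitive]

lemma weightPrimitive_eq_sqrt {x : ℝ} (hx : 0 < x) :
    weightPrimitive x = -2 * √((1 - x) / x) := by
  rw [weightPrimitive, sqrt_div' _ hx.le, sqrt_eq_rpow, sqrt_eq_rpow, neg_div, rpow_neg hx.le,
    ← div_eq_mul_inv]

lemma integrableOn_weight {a : ℝ} (ha : 0 < a) :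
    IntegrableOn (fun x : ℝ => x ^ (-(3 : ℝ) / 2) * (1 - x) ^ (-(1 : ℝ) / 2)) (Set.Ioo a 1) := by
  refine (intervalIntegral.integrableOn_deriv_of_nonneg (continuousOn_weightPrimitive ha)
    (fun x hx => hasDerivAt_weightPrimitive (ha.trans hx.1) hx.2) fun x hx => ?_).mono_set
    Set.Ioo_subset_Ioc_self
  exact mul_nonneg (rpow_nonneg (ha.trans hx.1).le _) (rpow_nonneg (sub_nonneg.2 hx.2.le) _)

lemma integral_weight {a : ℝ} (ha : 0 < a) (ha1 : a < 1) :
    ∫ x in Set.Ioo a 1, x ^ (-(3 : ℝ) / 2) * (1 - x) ^ (-(1 : ℝ) / 2) = 2 * √((1 - a) / a) := by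
  rw [← integral_Ioc_eq_integral_Ioo, ← intervalIntegral.integral_of_le ha1.le,
    intervalIntegral.integral_eq_sub_of_hasDerivAt_of_le ha1.le (continuousOn_weightPrimitive ha)
      (fun x hx => hasDerivAt_weightPrimitive (ha.trans hx.1) hx.2)
      ((intervalIntegrable_iff_integrableOn_Ioo_of_le ha1.le).2 (integrableOn_weight ha)),
    weightPrimitive_one, weightPrimitive_eq_sqrt ha]
  ring

/-- integrability of the integrand of `c(α,β)` on `((α−(1−β))/β, 1)`
and positivity/upper bound of the integral. -/
theorem stmt5 (β α : ℝ) (hβ1 : 0 < β) (hβ2 : β ≤ 1 / 2)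
    (hα1 : 1 - β < α) (hα2 : α < 1) :
    IntegrableOn (fun x => cIntegrand α β x) (Set.Ioo ((α - (1 - β)) / β) 1) ∧
    0 < (∫ x in Set.Ioo ((α - (1 - β)) / β) 1, cIntegrand α β x) ∧
    (∫ x in Set.Ioo ((α - (1 - β)) / β) 1, cIntegrand α β x) ≤
      2 * Real.sqrt ((1 - α) / (α - (1 - β))) *
        Real.sqrt (sFun α β 1 / (1 - sFun α β 1)) := by
  set a := (α - (1 - β)) / β with ha_def
  have hγ : 0 < α - (1 - β) := sub_pos.2 hα1
  have hβ3 : 0 < 1 - β := by linarith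
  have ha : 0 < a := div_pos hγ hβ1
  have ha1 : a < 1 := by rw [ha_def, div_lt_one hβ1]; linarith
  have hs1 : sFun α β 1 < 1 := by rw [sFun, div_lt_one hβ3]; linarith
  have hs_pos : ∀ x ∈ Set.Ioo a 1, 0 < sFun α β x := fun x hx => by
    have := (div_lt_iff₀' hβ1).1 hx.1
    exact div_pos (by linarith) hβ3
  have hs_le : ∀ x ∈ Set.Ioo a 1, sFun α β x ≤ sFun α β 1 := fun x hx => by
    have := hx.2.le
    unfold sFun
    gcongr
  set K := √(sFun α β 1 / (1 - sFun α β 1)) with hK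
  set w : ℝ → ℝ := fun x => x ^ (-(3 : ℝ) / 2) * (1 - x) ^ (-(1 : ℝ) / 2) with hw
  have hw_pos : ∀ x ∈ Set.Ioo a 1, 0 < w x := fun x hx =>
    mul_pos (rpow_pos_of_pos (ha.trans hx.1) _) (rpow_pos_of_pos (sub_pos.2 hx.2) _)
  have hpos : ∀ x ∈ Set.Ioo a 1, 0 < cIntegrand α β x := fun x hx => by
    refine mul_pos (hw_pos x hx) (sqrt_pos.2 (div_pos (hs_pos x hx) ?_))
    linarith [hs_le x hx]
  have hle : ∀ x ∈ Set.Ioo a 1, cIntegrand α β x ≤ w x * K := fun x hx => by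
    refine mul_le_mul_of_nonneg_left (sqrt_le_sqrt ?_) (hw_pos x hx).le
    exact div_le_div₀ ((hs_pos x hx).le.trans (hs_le x hx)) (hs_le x hx) (by linarith)
      (by linarith [hs_le x hx])
  have hwint : IntegrableOn (fun x => w x * K) (Set.Ioo a 1) :=
    (integrableOn_weight ha).mul_const K
  have hmeas : Measurable (cIntegrand α β) := by
    unfold cIntegrand sFun
    fun_prop
  have hint : IntegrableOn (fun x => cIntegrand α β x) (Set.Ioo a 1) := by
    refine Integrable.mono' hwint hmeas.aestronglyMeasurable ?_
    filter_upwards [ae_restrict_mem measurableSet_Ioo] with x hx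
    rw [norm_of_nonneg (hpos x hx).le]
    exact hle x hx
  refine ⟨hint, ?_, ?_⟩
  · rw [← integral_Ioc_eq_integral_Ioo, ← intervalIntegral.integral_of_le ha1.le]
    exact intervalIntegral.intervalIntegral_pos_of_pos_on
      ((intervalIntegrable_iff_integrableOn_Ioo_of_le ha1.le).2 hint) hpos ha1
  · have hratio : (1 - a) / a = (1 - α) / (α - (1 - β)) := by
      rw [ha_def]
      field_simp
      ring
    calc ∫ x in Set.Ioo a 1, cIntegrand α β x
        ≤ ∫ x in Set.Ioo a 1, w x * K := setIntegral_mono_on hint hwint measurableSet_Ioo hle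
      _ = 2 * √((1 - α) / (α - (1 - β))) * K := by
        rw [integral_mul_const, integral_weight ha ha1, hratio]
end

section
/- Let l : ℕ → ℕ with l(n) → ∞, let r : ℕ → ℤ with |r(n)|/l(n) → 0, and let s⋆, s⋆⋆ : ℕ → ℕ be sequences. Assume that either (i) r(n) ≤ 0 for all n, s⋆(n) → ∞, and s⋆(n)/log( l(n)/(|r(n)|+1) ) → 0, or (ii) r(n) > 0 for all n with r(n) → ∞, s⋆(n) − r(n) → ∞, and (s⋆(n) − r(n))/r(n) → 0. Assume further that s⋆⋆(n)/l(n) → 0 and s⋆⋆(n) · log( l(n)/(|r(n)|+1) ) / l(n) → ∞. Then s⋆(n) ≤ s⋆⋆(n) for all sufficiently large n, and the sum Σ over integers j with s⋆(n) ≤ j ≤ s⋆⋆(n) of j^{−1/2} · (j − r(n))^{−1/2}, divided by log( l(n)/(|r(n)|+1) ), tends to 1 as n → ∞. -/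
open Filter Real

/-!
The summand `f(x) = x^{-1/2} (x - r)^{-1/2}` is decreasing and has the explicit antiderivative
`G(x) = 2 log (√x + √(x - r))`, so the sum over `s ≤ j ≤ S` equals `G(S) - G(s)` up to an error
of at most `f(s) ≤ 1` (`logPrim_le_sum`, `sum_le_logPrim`). Moreover `G(x)` lies between
`log (max x (x - r))` and `log (4 (x + |r|))`.

Write `R = |r|` and `L = log (l / (R + 1))`, which tends to infinity. Both cases of the hypothesis
yield, eventually, `s ≥ 1`, `s - r ≥ 1` and `s + R ≤ L (R + 1)`, while the conditions on `S` give
`l / L ≤ S` and `S + R ≤ l`. Hence the sum lies between `L - log 4 - 2 log L` and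
`L + 1 + log 4`, and dividing by `L` gives the limit `1`. Also `s ≤ L (R + 1) ≤ l / L ≤ S`,
because `L ^ 2 ≤ exp L` for large `L`.
-/

/-- The summand, as a function of a real variable. -/
noncomputable def summand (r x : ℝ) : ℝ := x ^ (-(1 : ℝ) / 2) * (x - r) ^ (-(1 : ℝ) / 2)

/-- An antiderivative of `summand r` on `x > max 0 r`. -/
noncomputable def logPrim (r x : ℝ) : ℝ := 2 * Real.log (√x + √(x - r))

lemma rpow_neg_half (x : ℝ) (hx : 0 < x) : x ^ (-(1 : ℝ) / 2) = (√x)⁻¹ := by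
  rw [Real.sqrt_eq_rpow, ← Real.rpow_neg hx.le]
  norm_num

lemma summand_antitone {r x y : ℝ} (hx : 0 < x) (hxr : 0 < x - r) (hxy : x ≤ y) :
    summand r y ≤ summand r x := by
  unfold summand
  have h1 : y ^ (-(1 : ℝ) / 2) ≤ x ^ (-(1 : ℝ) / 2) :=
    Real.rpow_le_rpow_of_nonpos hx hxy (by norm_num)
  have h2 : (y - r) ^ (-(1 : ℝ) / 2) ≤ (x - r) ^ (-(1 : ℝ) / 2) :=
    Real.rpow_le_rpow_of_nonpos hxr (by linarith) (by norm_num)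
  exact mul_le_mul h1 h2 (Real.rpow_nonneg (by linarith) _) (Real.rpow_nonneg hx.le _)

lemma hasDerivAt_logPrim {r x : ℝ} (hx : 0 < x) (hxr : 0 < x - r) :
    HasDerivAt (logPrim r) (summand r x) x := by
  have ha := Real.sqrt_pos.2 hx
  have hb := Real.sqrt_pos.2 hxr
  have h1 : HasDerivAt (fun y : ℝ => √y) (1 / (2 * √x)) x := Real.hasDerivAt_sqrt hx.ne'
  have h2 : HasDerivAt (fun y : ℝ => √(y - r)) (1 / (2 * √(x - r))) x :=
    ((hasDerivAt_id x).sub_const r).sqrt hxr.ne'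
  have h3 := ((h1.add h2).log (by simp only [Pi.add_apply]; positivity)).const_mul 2
  refine h3.congr_deriv ?_
  simp only [summand, rpow_neg_half x hx, rpow_neg_half _ hxr, Pi.add_apply]
  field_simp
  ring

lemma logPrim_step {r x : ℝ} (hx : 0 < x) (hxr : 0 < x - r) :
    summand r (x + 1) ≤ logPrim r (x + 1) - logPrim r x ∧
      logPrim r (x + 1) - logPrim r x ≤ summand r x := by
  obtain ⟨c, ⟨hc1, hc2⟩, hc⟩ := exists_hasDerivAt_eq_slope (logPrim r) (summand r)
    (show x < x + 1 by linarith)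
    (fun y hy => (hasDerivAt_logPrim (by linarith [hy.1])
      (by linarith [hy.1])).continuousAt.continuousWithinAt)
    (fun y hy => hasDerivAt_logPrim (by linarith [hy.1]) (by linarith [hy.1]))
  have h : logPrim r (x + 1) - logPrim r x = summand r c := by rw [hc]; simp
  rw [h]
  exact ⟨summand_antitone (by linarith) (by linarith) hc2.le, summand_antitone hx hxr hc1.le⟩

lemma logPrim_le_sum {r : ℝ} {s S : ℕ} (hs : 0 < (s : ℝ)) (hsr : 0 < (s : ℝ) - r) (hS : s ≤ S) :
    logPrim r (S + 1) - logPrim r s ≤ ∑ j ∈ Finset.Icc s S, summand r j := by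
  induction S, hS using Nat.le_induction with
  | base => simpa using (logPrim_step hs hsr).2
  | succ k hk ih =>
    rw [Finset.sum_Icc_succ_top (by omega)]
    have hk' : (s : ℝ) ≤ k := by exact_mod_cast hk
    have := (logPrim_step (r := r) (x := k + 1) (by linarith) (by linarith)).2
    push_cast at *
    linarith

lemma sum_le_logPrim {r : ℝ} {s S : ℕ} (hs : 0 < (s : ℝ)) (hsr : 0 < (s : ℝ) - r) (hS : s ≤ S) :
    ∑ j ∈ Finset.Icc s S, summand r j ≤ summand r s + (logPrim r S - logPrim r s) := by
  induction S, hS using Nat.le_induction with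
  | base => simp
  | succ k hk ih =>
    rw [Finset.sum_Icc_succ_top (by omega)]
    have hk' : (s : ℝ) ≤ k := by exact_mod_cast hk
    have := (logPrim_step (r := r) (x := k) (by linarith) (by linarith)).1
    push_cast at *
    linarith

lemma log_le_logPrim {r x M : ℝ} (hx : 0 < x) (hxr : 0 < x - r) (hM : 0 < M)
    (h : M ≤ x ∨ M ≤ x - r) : Real.log M ≤ logPrim r x := by
  have ha := Real.sqrt_pos.2 hx
  have hb := Real.sqrt_pos.2 hxr
  have e : logPrim r x = Real.log ((√x + √(x - r)) ^ 2) := by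
    rw [Real.log_pow]; simp [logPrim]
  rw [e]
  apply Real.log_le_log hM
  have h1 := Real.sq_sqrt hx.le
  have h2 := Real.sq_sqrt hxr.le
  rcases h with h | h <;> nlinarith [mul_pos ha hb]

lemma logPrim_le_log {r x : ℝ} (hx : 0 < x) (hxr : 0 < x - r) :
    logPrim r x ≤ Real.log (4 * (x + |r|)) := by
  have ha := Real.sqrt_pos.2 hx
  have hb := Real.sqrt_pos.2 hxr
  have e : logPrim r x = Real.log ((√x + √(x - r)) ^ 2) := by
    rw [Real.log_pow]; simp [logPrim]
  rw [e]
  apply Real.log_le_log (by positivity)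
  have h1 := Real.sq_sqrt hx.le
  have h2 := Real.sq_sqrt hxr.le
  nlinarith [sq_nonneg (√x - √(x - r)), neg_abs_le r, abs_nonneg r]

/-- The two-sided bound for a single `n`, with `R = |r|` and `L = log (l / (R + 1))`. -/
lemma sum_bounds {r l L : ℝ} {s S : ℕ} (hl : 0 < l) (hL : L = Real.log (l / (|r| + 1)))
    (hL1 : 1 ≤ L) (hL2 : L ^ 2 ≤ Real.exp L) (hs : 1 ≤ (s : ℝ)) (hsr : 1 ≤ (s : ℝ) - r)
    (hsR : s + |r| ≤ L * (|r| + 1)) (hS1 : l / L ≤ S) (hS2 : S + |r| ≤ l) :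
    s ≤ S ∧ L - Real.log 4 - 2 * Real.log L ≤ ∑ j ∈ Finset.Icc s S, summand r j ∧
      ∑ j ∈ Finset.Icc s S, summand r j ≤ L + 1 + Real.log 4 := by
  have hR := abs_nonneg r
  have hR1 : 0 < |r| + 1 := by linarith
  have hL0 : 0 < L := by linarith
  have hexp : Real.exp L = l / (|r| + 1) := by rw [hL, Real.exp_log (by positivity)]
  have hLeq : L = Real.log l - Real.log (|r| + 1) := by
    rw [hL, Real.log_div hl.ne' hR1.ne']
  have hsS : (s : ℝ) ≤ S := by
    have h1 : L * (|r| + 1) ≤ l / L := by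
      rw [le_div_iff₀ hL0]
      rw [hexp, le_div_iff₀ hR1] at hL2
      linarith
    linarith
  have hsS' : s ≤ S := by exact_mod_cast hsS
  have hs0 : 0 < (s : ℝ) := by linarith
  have hsr0 : 0 < (s : ℝ) - r := by linarith
  have hlS : Real.log l - Real.log L ≤ logPrim r (S + 1) := by
    rw [← Real.log_div hl.ne' hL0.ne']
    exact log_le_logPrim (by linarith) (by linarith) (by positivity) (Or.inl (by linarith))
  have hus : logPrim r s ≤ Real.log 4 + (Real.log L + Real.log (|r| + 1)) := by
    rw [← Real.log_mul hL0.ne' hR1.ne', ← Real.log_mul (by norm_num) (by positivity)]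
    exact (logPrim_le_log hs0 hsr0).trans (Real.log_le_log (by linarith) (by linarith))
  have hls : Real.log (|r| + 1) ≤ logPrim r s := by
    apply log_le_logPrim hs0 hsr0 hR1
    -- `max s (s - r) ≥ |r| + 1`, by the sign of `r`
    rcases le_total 0 r with h | h
    · left; rw [abs_of_nonneg h]; linarith
    · right; rw [abs_of_nonpos h]; linarith
  have huS : logPrim r S ≤ Real.log 4 + Real.log l := by
    rw [← Real.log_mul (by norm_num) hl.ne']
    exact (logPrim_le_log (by linarith) (by linarith)).trans
      (Real.log_le_log (by linarith) (by linarith))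
  have hf : summand r s ≤ 1 :=
    mul_le_one₀ (Real.rpow_le_one_of_one_le_of_nonpos hs (by norm_num))
      (Real.rpow_nonneg hsr0.le _) (Real.rpow_le_one_of_one_le_of_nonpos hsr (by norm_num))
  have h1 := logPrim_le_sum hs0 hsr0 hsS'
  have h2 := sum_le_logPrim hs0 hsr0 hsS'
  exact ⟨hsS', by linarith, by linarith⟩

/-- Lemma on `Σ j^{-1/2}(j−r)^{-1/2}`. -/
theorem stmt18 (l : ℕ → ℕ) (r : ℕ → ℤ) (sst sss : ℕ → ℕ)
    (hl : Tendsto l atTop atTop)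
    (hr : Tendsto (fun n => ((|r n| : ℤ) : ℝ) / l n) atTop (nhds 0))
    (hcase :
      ((∀ n, r n ≤ 0) ∧ Tendsto sst atTop atTop ∧
        Tendsto (fun n => (sst n : ℝ) /
          Real.log ((l n : ℝ) / (((|r n| : ℤ) : ℝ) + 1))) atTop (nhds 0)) ∨
      ((∀ n, 0 < r n) ∧ Tendsto r atTop atTop ∧
        Tendsto (fun n => (sst n : ℤ) - r n) atTop atTop ∧
        Tendsto (fun n => ((sst n : ℝ) - (r n : ℝ)) / (r n : ℝ)) atTop (nhds 0)))
    (hsss1 : Tendsto (fun n => (sss n : ℝ) / l n) atTop (nhds 0))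
    (hsss2 : Tendsto (fun n => (sss n : ℝ) *
      Real.log ((l n : ℝ) / (((|r n| : ℤ) : ℝ) + 1)) / l n) atTop atTop) :
    (∀ᶠ n in atTop, sst n ≤ sss n) ∧
    Tendsto (fun n =>
      (∑ j ∈ Finset.Icc (sst n) (sss n),
        (j : ℝ) ^ (-(1 : ℝ) / 2) * ((j : ℝ) - (r n : ℝ)) ^ (-(1 : ℝ) / 2)) /
      Real.log ((l n : ℝ) / (((|r n| : ℤ) : ℝ) + 1))) atTop (nhds 1) := by
  simp only [Int.cast_abs] at *
  set L : ℕ → ℝ := fun n => Real.log ((l n : ℝ) / (|(r n : ℝ)| + 1)) with hLdef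
  have hLn : ∀ n, Real.log ((l n : ℝ) / (|(r n : ℝ)| + 1)) = L n := fun n => rfl
  simp only [hLn] at hcase hsss2 ⊢
  have hl0 : ∀ᶠ n in atTop, 0 < (l n : ℝ) := by
    filter_upwards [hl.eventually_gt_atTop 0] with n hn
    exact_mod_cast hn
  have hL : Tendsto L atTop atTop := by
    apply Real.tendsto_log_atTop.comp
    have h1 : Tendsto (fun n => |(r n : ℝ)| / l n + 1 / (l n : ℝ)) atTop (nhds 0) := by
      simpa using hr.add (tendsto_one_div_atTop_nhds_zero_nat.comp hl)
    have h2 : Tendsto (fun n => |(r n : ℝ)| / l n + 1 / (l n : ℝ)) atTop (nhdsWithin 0 (Set.Ioi 0)) :=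
      tendsto_nhdsWithin_iff.2 ⟨h1, by
        filter_upwards [hl0] with n hn
        simp only [Set.mem_Ioi]
        positivity⟩
    refine h2.inv_tendsto_nhdsGT_zero.congr fun n => ?_
    rw [Pi.inv_apply, ← add_div, inv_div]
  have hLsq : ∀ᶠ n in atTop, L n ^ 2 ≤ Real.exp (L n) := by
    have h := (Real.tendsto_exp_div_pow_atTop 2).comp hL
    filter_upwards [h.eventually_ge_atTop 1, hL.eventually_ge_atTop 1] with n hn hn1
    have : 0 < L n ^ 2 := by positivity
    simpa using (le_div_iff₀ this).1 hn
  have hstart : ∀ᶠ n in atTop, 1 ≤ (sst n : ℝ) ∧ 1 ≤ (sst n : ℝ) - r n ∧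
      (sst n : ℝ) + |(r n : ℝ)| ≤ L n * (|(r n : ℝ)| + 1) := by
    rcases hcase with ⟨hr0, hs, hsL⟩ | ⟨hr0, -, hsr, hsq⟩
    · filter_upwards [hs.eventually_ge_atTop 1, hsL.eventually_le_const one_pos,
        hL.eventually_ge_atTop 1] with n h1 h2 h3
      have h1' : (1 : ℝ) ≤ sst n := by exact_mod_cast h1
      have h0 : (r n : ℝ) ≤ 0 := by exact_mod_cast hr0 n
      rw [div_le_one (by linarith)] at h2
      have := abs_nonneg (r n : ℝ)
      exact ⟨h1', by linarith, by nlinarith⟩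
    · filter_upwards [hsr.eventually_ge_atTop 1, hsq.eventually_le_const one_pos,
        hL.eventually_ge_atTop 3] with n h1 h2 h3
      have h1' : (1 : ℝ) ≤ (sst n : ℝ) - r n := by exact_mod_cast h1
      have h0 : 0 < (r n : ℝ) := by exact_mod_cast hr0 n
      rw [div_le_one h0] at h2
      rw [abs_of_pos h0]
      exact ⟨by linarith, h1', by nlinarith⟩
  have key : ∀ᶠ n in atTop, sst n ≤ sss n ∧
      L n - Real.log 4 - 2 * Real.log (L n) ≤
        ∑ j ∈ Finset.Icc (sst n) (sss n), summand (r n) j ∧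
      ∑ j ∈ Finset.Icc (sst n) (sss n), summand (r n) j ≤ L n + 1 + Real.log 4 := by
    have hend : Tendsto (fun n => (sss n : ℝ) / l n + |(r n : ℝ)| / l n) atTop (nhds 0) := by
      simpa using hsss1.add hr
    filter_upwards [hl0, hLsq, hstart, hL.eventually_ge_atTop 1, hsss2.eventually_ge_atTop 1,
      hend.eventually_le_const one_pos] with n h0 h1 h2 h3 h4 h5
    have hL0 : 0 < L n := by linarith
    rw [← add_div, div_le_one h0] at h5
    rw [le_div_iff₀ h0, one_mul] at h4
    exact sum_bounds h0 rfl h3 h1 h2.1 h2.2.1 h2.2.2 ((div_le_iff₀ hL0).2 h4) h5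
  refine ⟨key.mono fun n h => h.1, ?_⟩
  change Tendsto (fun n => (∑ j ∈ Finset.Icc (sst n) (sss n), summand (r n) j) / L n) atTop (nhds 1)
  have hinv : Tendsto (fun n => (L n)⁻¹) atTop (nhds 0) := hL.inv_tendsto_atTop
  have hlog : Tendsto (fun n => Real.log (L n) / L n) atTop (nhds 0) :=
    (Real.isLittleO_log_id_atTop.tendsto_div_nhds_zero).comp hL
  have hlow : Tendsto (fun n => 1 - Real.log 4 * (L n)⁻¹ - 2 * (Real.log (L n) / L n))
      atTop (nhds 1) := by
    simpa using ((hinv.const_mul (Real.log 4)).const_sub 1).sub (hlog.const_mul 2)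
  have hup : Tendsto (fun n => 1 + (1 + Real.log 4) * (L n)⁻¹) atTop (nhds 1) := by
    simpa using (hinv.const_mul (1 + Real.log 4)).const_add 1
  refine tendsto_of_tendsto_of_tendsto_of_le_of_le' hlow hup ?_ ?_
  · filter_upwards [key, hL.eventually_gt_atTop 0] with n h h0
    rw [le_div_iff₀ h0]
    refine le_trans (le_of_eq ?_) h.2.1
    field_simp
  · filter_upwards [key, hL.eventually_gt_atTop 0] with n h h0
    rw [div_le_iff₀ h0]
    refine h.2.2.trans (le_of_eq ?_)
    field_simp
    ring
end

section
/- Let l : ℕ → ℕ with l(n) → ∞, let r : ℕ → ℤ with |r(n)|/l(n) → 0, and let s⋆, s⋆⋆ : ℕ → ℕ be sequences. Assume that either (i) r(n) ≤ 0 for all n, s⋆(n) → ∞, and s⋆(n)/log( l(n)/(|r(n)|+1) ) → 0, or (ii) r(n) > 0 for all n with r(n) → ∞, (s⋆(n) − r(n))/r(n) → 0, and (s⋆(n) − r(n)) · log( l(n)/r(n) ) / r(n) → ∞. Assume further that s⋆⋆(n)/l(n) → 0 and s⋆⋆(n) · log( l(n)/(|r(n)|+1) ) / l(n) → ∞. Then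 there exists a choice of such s⋆ (i.e., the hypotheses on s⋆ are satisfiable), s⋆(n) ≤ s⋆⋆(n) for all sufficiently large n, and the sum Σ over integers j with s⋆(n) ≤ j ≤ s⋆⋆(n) of j^{1/2} · (j − r(n))^{−3/2}, divided by log( l(n)/(|r(n)|+1) ), tends to 1 as n → ∞. -/
open Filter Real

/-!
Write `L = log (l / (|r| + 1))`, `s = s⋆`, `S = s⋆⋆`. With `k = j - r` the summand is `√(j / k) / k`,
so it is close to `1 / k`, whose sum is a difference of logarithms.

* If `r = -m ≤ 0`, then `j / k = 1 - m / k ∈ [0, 1]`, hence the summand lies between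
  `1 / k - m / k ^ 2` and `1 / k`. The correction `∑ m / k ^ 2` is bounded, so the sum is
  `log (S + m) - log (s + m)` up to `O(1)`, and `s ≤ L`, `l / L ≤ S ≤ l / 2` make this
  `L + O(log L)`.
* If `r > 0`, then `j / k = 1 + r / k ≥ 1`, hence the summand lies between `1 / k` and
  `1 / k + r / (2 k ^ 2)`. Here the correction is `O(r / (s - r))`, which is `o(L)` by the
  second hypothesis on `s - r`.

All finite sums are bounded by telescoping (`sum_Icc_le_of_le_sub` and `le_sum_Icc_of_sub_le`), and
the two regimes are carried by `sum_bounds_nonpos` and `sum_bounds_pos`.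
-/

/-! ### Telescoping and elementary inequalities -/

theorem sum_Icc_le_of_le_sub (f F : ℕ → ℝ) (a b : ℕ) (hab : a ≤ b)
    (h : ∀ j, a ≤ j → f j ≤ F (j + 1) - F j) :
    ∑ j ∈ Finset.Icc a b, f j ≤ F (b + 1) - F a := by
  induction b, hab using Nat.le_induction with
  | base => simpa using h a le_rfl
  | succ b hb ih =>
    rw [Finset.sum_Icc_succ_top (by omega)]
    have := h (b + 1) (by omega)
    linarith

theorem le_sum_Icc_of_sub_le (f F : ℕ → ℝ) (a b : ℕ) (hab : a ≤ b)
    (h : ∀ j, a ≤ j → F (j + 1) - F j ≤ f j) :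
    F (b + 1) - F a ≤ ∑ j ∈ Finset.Icc a b, f j := by
  have := sum_Icc_le_of_le_sub (fun j => - f j) (fun j => - F j) a b hab
    (fun j hj => by have := h j hj; linarith)
  rw [Finset.sum_neg_distrib] at this
  linarith

theorem summand_eq (x k : ℝ) (hx : 0 ≤ x) (hk : 0 < k) :
    x ^ ((1 : ℝ) / 2) * k ^ (-(3 : ℝ) / 2) = √(x / k) / k := by
  rw [Real.sqrt_div hx, Real.sqrt_eq_rpow, Real.sqrt_eq_rpow, div_div]
  have : k ^ ((1 : ℝ) / 2) * k = k ^ ((3 : ℝ) / 2) := by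
    nth_rewrite 2 [← Real.rpow_one k]
    rw [← Real.rpow_add hk]; norm_num
  rw [this, neg_div, Real.rpow_neg hk.le, ← div_eq_mul_inv]

theorem log_succ_sub_log_le (x : ℝ) (hx : 0 < x) : log (x + 1) - log x ≤ 1 / x := by
  rw [← Real.log_div (by positivity) hx.ne']
  have := Real.log_le_sub_one_of_pos (x := (x + 1) / x) (by positivity)
  have e : (x + 1) / x - 1 = 1 / x := by field_simp; ring
  linarith

theorem inv_succ_le_log_succ_sub_log (x : ℝ) (hx : 0 < x) :
    1 / (x + 1) ≤ log (x + 1) - log x := by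
  have := Real.log_le_sub_one_of_pos (x := x / (x + 1)) (by positivity)
  rw [Real.log_div hx.ne' (by positivity)] at this
  have e : x / (x + 1) - 1 = - (1 / (x + 1)) := by field_simp; ring
  linarith

/-! ### Explicit bounds for the sum -/

/-- Explicit bounds for the sum when the shift `m = -r` is nonnegative. -/
theorem sum_bounds_nonpos (a b : ℕ) (m : ℝ) (hm : 0 ≤ m) (ha : 2 ≤ a) (hab : a ≤ b) :
    log (b + 1 + m) - log (a + m) - 1 ≤
      ∑ j ∈ Finset.Icc a b, (j : ℝ) ^ ((1 : ℝ) / 2) * ((j : ℝ) + m) ^ (-(3 : ℝ) / 2) ∧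
    ∑ j ∈ Finset.Icc a b, (j : ℝ) ^ ((1 : ℝ) / 2) * ((j : ℝ) + m) ^ (-(3 : ℝ) / 2)
      ≤ log (b + m) - log (a + m - 1) := by
  have ha' : (2 : ℝ) ≤ a := by exact_mod_cast ha
  have hb' : (2 : ℝ) ≤ b := by exact_mod_cast ha.trans hab
  constructor
  · have := le_sum_Icc_of_sub_le
      (fun j : ℕ => (j : ℝ) ^ ((1 : ℝ) / 2) * ((j : ℝ) + m) ^ (-(3 : ℝ) / 2))
      (fun j : ℕ => log (j + m) + m / (j + m - 1)) a b hab ?_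
    · have h1 : 0 ≤ m / ((b : ℝ) + 1 + m - 1) := div_nonneg hm (by linarith)
      have h2 : m / ((a : ℝ) + m - 1) ≤ 1 := by rw [div_le_one (by linarith)]; linarith
      push_cast at this
      linarith
    · intro j hj
      have hj' : (2 : ℝ) ≤ j := by exact_mod_cast ha.trans hj
      rw [summand_eq _ _ (by linarith) (by linarith)]
      have hk : 0 < (j : ℝ) + m := by linarith
      have ht1 : (j : ℝ) / (j + m) ≤ 1 := by rw [div_le_one hk]; linarith
      have ht0 : 0 ≤ (j : ℝ) / (j + m) := by positivity
      have hs : (j : ℝ) / (j + m) ≤ √((j : ℝ) / (j + m)) :=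
        Real.le_sqrt_of_sq_le (by nlinarith)
      have h3 : (j : ℝ) / (j + m) / (j + m) ≤ √((j : ℝ) / (j + m)) / (j + m) := by gcongr
      have h4 := log_succ_sub_log_le _ hk
      have h5 : m / ((j : ℝ) + m) - m / (j + m - 1) ≤ - (m / (j + m) ^ 2) := by
        have : 0 < (j : ℝ) + m - 1 := by linarith
        have e : m / ((j : ℝ) + m) - m / (j + m - 1) = - (m / ((j + m) * (j + m - 1))) := by
          field_simp; ring
        rw [e]
        apply neg_le_neg
        apply div_le_div_of_nonneg_left hm (by positivity)
        nlinarith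
      have h6 : (j : ℝ) / (j + m) / (j + m) = 1 / (j + m) - m / (j + m) ^ 2 := by
        field_simp; ring
      push_cast
      rw [show (j : ℝ) + 1 + m = j + m + 1 by ring, show (j : ℝ) + m + 1 - 1 = j + m by ring]
      linarith
  · have := sum_Icc_le_of_le_sub
      (fun j : ℕ => (j : ℝ) ^ ((1 : ℝ) / 2) * ((j : ℝ) + m) ^ (-(3 : ℝ) / 2))
      (fun j : ℕ => log (j + m - 1)) a b hab ?_
    · push_cast at this
      rwa [show (b : ℝ) + 1 + m - 1 = b + m by ring] at this
    · intro j hj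
      have hj' : (2 : ℝ) ≤ j := by exact_mod_cast ha.trans hj
      rw [summand_eq _ _ (by linarith) (by linarith)]
      have hk : 0 < (j : ℝ) + m := by linarith
      have ht1 : (j : ℝ) / (j + m) ≤ 1 := by rw [div_le_one hk]; linarith
      have hs : √((j : ℝ) / (j + m)) ≤ 1 := Real.sqrt_le_one.mpr ht1
      have h3 : √((j : ℝ) / (j + m)) / (j + m) ≤ 1 / (j + m) := by gcongr
      have h4 := inv_succ_le_log_succ_sub_log ((j : ℝ) + m - 1) (by linarith)
      push_cast
      rw [show (j : ℝ) + 1 + m - 1 = j + m by ring]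
      rw [show (j : ℝ) + m - 1 + 1 = j + m by ring] at h4
      linarith

/-- Explicit bounds for the sum when the shift `ρ = r` is positive. -/
theorem sum_bounds_pos (a b : ℕ) (ρ : ℝ) (hρ : 0 < ρ) (ha : ρ + 1 ≤ a) (hab : a ≤ b) :
    log (b + 1 - ρ) - log (a - ρ) ≤
      ∑ j ∈ Finset.Icc a b, (j : ℝ) ^ ((1 : ℝ) / 2) * ((j : ℝ) - ρ) ^ (-(3 : ℝ) / 2) ∧
    ∑ j ∈ Finset.Icc a b, (j : ℝ) ^ ((1 : ℝ) / 2) * ((j : ℝ) - ρ) ^ (-(3 : ℝ) / 2)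
      ≤ log (b + 1 - ρ) - log (a - ρ) + (1 + ρ) / (a - ρ) := by
  have hb' : (a : ℝ) ≤ b := by exact_mod_cast hab
  constructor
  · have := le_sum_Icc_of_sub_le
      (fun j : ℕ => (j : ℝ) ^ ((1 : ℝ) / 2) * ((j : ℝ) - ρ) ^ (-(3 : ℝ) / 2))
      (fun j : ℕ => log (j - ρ)) a b hab ?_
    · push_cast at this
      exact this
    · intro j hj
      have hj' : (a : ℝ) ≤ j := by exact_mod_cast hj
      rw [summand_eq _ _ (by linarith) (by linarith)]
      have hk : 0 < (j : ℝ) - ρ := by linarith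
      have ht1 : 1 ≤ (j : ℝ) / (j - ρ) := by rw [one_le_div hk]; linarith
      have hs : 1 ≤ √((j : ℝ) / (j - ρ)) := Real.one_le_sqrt.mpr ht1
      have h3 : 1 / (j - ρ) ≤ √((j : ℝ) / (j - ρ)) / (j - ρ) := by gcongr
      have h4 := log_succ_sub_log_le _ hk
      push_cast
      rw [show (j : ℝ) + 1 - ρ = j - ρ + 1 by ring]
      linarith
  · have := sum_Icc_le_of_le_sub
      (fun j : ℕ => (j : ℝ) ^ ((1 : ℝ) / 2) * ((j : ℝ) - ρ) ^ (-(3 : ℝ) / 2))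
      (fun j : ℕ => log (j - ρ) - (1 + ρ) / (j - ρ)) a b hab ?_
    · push_cast at this
      have h1 : 0 ≤ (1 + ρ) / ((b : ℝ) + 1 - ρ) := div_nonneg (by linarith) (by linarith)
      linarith
    · intro j hj
      have hj' : (a : ℝ) ≤ j := by exact_mod_cast hj
      rw [summand_eq _ _ (by linarith) (by linarith)]
      obtain ⟨k, hk⟩ : ∃ k : ℝ, (j : ℝ) - ρ = k := ⟨_, rfl⟩
      have hk1 : 1 ≤ k := by linarith
      have hk0 : 0 < k := by linarith
      have hjk : (j : ℝ) = k + ρ := by linarith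
      push_cast
      rw [show (j : ℝ) + 1 - ρ = k + 1 by linarith, hk, hjk]
      have hs : √((k + ρ) / k) ≤ 1 + ρ / (2 * k) := by
        apply Real.sqrt_le_iff.mpr
        refine ⟨by positivity, ?_⟩
        have e : (1 + ρ / (2 * k)) ^ 2 = (k + ρ) / k + (ρ / (2 * k)) ^ 2 := by
          field_simp; ring
        rw [e]
        have := sq_nonneg (ρ / (2 * k))
        linarith
      have h3 : √((k + ρ) / k) / k ≤ (1 + ρ / (2 * k)) / k := by gcongr
      have h4 := inv_succ_le_log_succ_sub_log k hk0
      -- `1 / (2 k ^ 2) ≤ 1 / (k (k + 1)) = 1 / k - 1 / (k + 1)` absorbs the correction term.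
      have h5 : (1 + ρ / (2 * k)) / k ≤ 1 / (k + 1) + (1 + ρ) / k - (1 + ρ) / (k + 1) := by
        have e : 1 / (k + 1) + (1 + ρ) / k - (1 + ρ) / (k + 1) - (1 + ρ / (2 * k)) / k
            = ρ * (k - 1) / (2 * k ^ 2 * (k + 1)) := by
          field_simp; ring
        have : 0 ≤ ρ * (k - 1) / (2 * k ^ 2 * (k + 1)) := by
          apply div_nonneg _ (by positivity)
          exact mul_nonneg hρ.le (by linarith)
        linarith
      linarith

/-! ### The asymptotics -/

/-- Lemma on `Σ j^{1/2}(j−r)^{-3/2}`. -/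
theorem stmt19 (l : ℕ → ℕ) (r : ℕ → ℤ) (sst sss : ℕ → ℕ)
    (hl : Tendsto l atTop atTop)
    (hr : Tendsto (fun n => ((|r n| : ℤ) : ℝ) / l n) atTop (nhds 0))
    (hcase :
      ((∀ n, r n ≤ 0) ∧ Tendsto sst atTop atTop ∧
        Tendsto (fun n => (sst n : ℝ) /
          Real.log ((l n : ℝ) / (((|r n| : ℤ) : ℝ) + 1))) atTop (nhds 0)) ∨
      ((∀ n, 0 < r n) ∧ Tendsto r atTop atTop ∧
        Tendsto (fun n => ((sst n : ℝ) - (r n : ℝ)) / (r n : ℝ)) atTop (nhds 0) ∧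
        Tendsto (fun n => ((sst n : ℝ) - (r n : ℝ)) *
          Real.log ((l n : ℝ) / (r n : ℝ)) / (r n : ℝ)) atTop atTop))
    (hsss1 : Tendsto (fun n => (sss n : ℝ) / l n) atTop (nhds 0))
    (hsss2 : Tendsto (fun n => (sss n : ℝ) *
      Real.log ((l n : ℝ) / (((|r n| : ℤ) : ℝ) + 1)) / l n) atTop atTop) :
    (∃ sst' : ℕ → ℕ,
      ((∀ n, r n ≤ 0) ∧ Tendsto sst' atTop atTop ∧
        Tendsto (fun n => (sst' n : ℝ) /
          Real.log ((l n : ℝ) / (((|r n| : ℤ) : ℝ) + 1))) atTop (nhds 0)) ∨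
      ((∀ n, 0 < r n) ∧ Tendsto r atTop atTop ∧
        Tendsto (fun n => ((sst' n : ℝ) - (r n : ℝ)) / (r n : ℝ)) atTop (nhds 0) ∧
        Tendsto (fun n => ((sst' n : ℝ) - (r n : ℝ)) *
          Real.log ((l n : ℝ) / (r n : ℝ)) / (r n : ℝ)) atTop atTop)) ∧
    (∀ᶠ n in atTop, sst n ≤ sss n) ∧
    Tendsto (fun n =>
      (∑ j ∈ Finset.Icc (sst n) (sss n),
        (j : ℝ) ^ ((1 : ℝ) / 2) * ((j : ℝ) - (r n : ℝ)) ^ (-(3 : ℝ) / 2)) /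
      Real.log ((l n : ℝ) / (((|r n| : ℤ) : ℝ) + 1))) atTop (nhds 1) := by
  refine ⟨⟨sst, hcase⟩, ?_⟩
  obtain ⟨L, hL⟩ : ∃ L : ℕ → ℝ,
      ∀ n, Real.log ((l n : ℝ) / (((|r n| : ℤ) : ℝ) + 1)) = L n := ⟨_, fun _ => rfl⟩
  obtain ⟨M, hM⟩ : ∃ M : ℕ → ℝ, ∀ n, ((|r n| : ℤ) : ℝ) = M n := ⟨_, fun _ => rfl⟩
  have hM0 : ∀ n, 0 ≤ M n := fun n => by rw [← hM]; positivity
  have hlR : Tendsto (fun n => (l n : ℝ)) atTop atTop := tendsto_natCast_atTop_atTop.comp hl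
  have hl0 : ∀ᶠ n in atTop, (0 : ℝ) < l n := hlR.eventually_gt_atTop 0
  simp only [hL] at hcase hsss2 ⊢
  simp only [hM] at hL hr
  have hLtop : Tendsto L atTop atTop := by
    have h1 : Tendsto (fun n => (M n + 1) / (l n : ℝ)) atTop (nhds 0) := by
      have := hr.add (tendsto_inv_atTop_zero.comp hlR)
      simp only [add_zero] at this
      refine this.congr fun n => ?_
      simp only [Function.comp, add_div, one_div]
    have h2 : Tendsto (fun n => (M n + 1) / (l n : ℝ)) atTop (nhdsWithin 0 (Set.Ioi 0)) := by
      refine tendsto_nhdsWithin_iff.mpr ⟨h1, ?_⟩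
      filter_upwards [hl0] with n hn
      have := hM0 n
      exact div_pos (by linarith) hn
    have h3 := Real.tendsto_log_atTop.comp (tendsto_inv_nhdsGT_zero.comp h2)
    refine h3.congr fun n => ?_
    simp only [Function.comp, inv_div, hL]
  have hlexp : ∀ᶠ n in atTop, (l n : ℝ) = (M n + 1) * exp (L n) := by
    filter_upwards [hl0] with n hn
    have := hM0 n
    rw [← hL, Real.exp_log (by positivity)]
    field_simp
  have hsq : ∀ᶠ n in atTop, (L n) ^ 2 ≤ exp (L n) := by
    have := (Real.tendsto_exp_div_pow_atTop 2).comp hLtop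
    filter_upwards [this.eventually_ge_atTop 1, hLtop.eventually_gt_atTop 0] with n h1 h2
    simp only [Function.comp] at h1
    rwa [one_le_div (by positivity)] at h1
  -- `l / L ≤ S ≤ l / 2` for large `n`.
  have hSlow : ∀ᶠ n in atTop, (l n : ℝ) / L n ≤ sss n := by
    filter_upwards [hsss2.eventually_ge_atTop 1, hl0, hLtop.eventually_gt_atTop 0] with n h1 h2 h3
    rw [div_le_iff₀ h3]
    rwa [one_le_div h2] at h1
  have hSup : ∀ᶠ n in atTop, (sss n : ℝ) ≤ l n / 2 := by
    filter_upwards [hsss1.eventually_le_const (show (0 : ℝ) < 1 / 2 by norm_num), hl0]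
      with n h1 h2
    rw [div_le_iff₀ h2] at h1
    linarith
  have hMup : ∀ᶠ n in atTop, M n ≤ l n / 2 := by
    filter_upwards [hr.eventually_le_const (show (0 : ℝ) < 1 / 2 by norm_num), hl0]
      with n h1 h2
    rw [div_le_iff₀ h2] at h1
    linarith
  have hinvL : Tendsto (fun n => 1 / L n) atTop (nhds 0) := by
    simpa [Function.comp_def] using tendsto_inv_atTop_zero.comp hLtop
  have hlogL : Tendsto (fun n => log (L n) / L n) atTop (nhds 0) :=
    (Real.isLittleO_log_id_atTop.tendsto_div_nhds_zero).comp hLtop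
  have hlower : Tendsto (fun n => 1 - 2 * (log (L n) / L n) - 1 / L n) atTop (nhds 1) := by
    simpa using (tendsto_const_nhds (x := (1 : ℝ))).sub (hlogL.const_mul 2) |>.sub hinvL
  rcases hcase with ⟨hr0, hs, hsL⟩ | ⟨hr0, hrt, hd, hdL⟩
  · have hsup : ∀ᶠ n in atTop, (sst n : ℝ) ≤ L n := by
      filter_upwards [hsL.eventually_le_const (show (0 : ℝ) < 1 by norm_num),
        hLtop.eventually_gt_atTop 0] with n h1 h2
      rwa [div_le_one h2] at h1
    have hle : ∀ᶠ n in atTop, sst n ≤ sss n := by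
      filter_upwards [hsup, hSlow, hlexp, hsq, hLtop.eventually_gt_atTop 0] with n h1 h2 h3 h4 h5
      have : L n ≤ l n / L n := by
        rw [le_div_iff₀ h5, h3]
        nlinarith [hM0 n, exp_pos (L n)]
      exact_mod_cast h1.trans (this.trans h2)
    refine ⟨hle, ?_⟩
    have hrM : ∀ n, (r n : ℝ) = - M n := fun n => by
      rw [← hM, abs_of_nonpos (hr0 n)]; push_cast; ring
    refine tendsto_of_tendsto_of_tendsto_of_le_of_le' hlower
      (tendsto_const_nhds (x := (1 : ℝ))) ?_ ?_
    · filter_upwards [hle, hs.eventually_ge_atTop 2, hsup, hSlow, hl0,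
        hLtop.eventually_gt_atTop 0] with n h1 h2 h3 h4 h5 h6
      have hb := (sum_bounds_nonpos (sst n) (sss n) (M n) (hM0 n) h2 h1).1
      have h2' : (2 : ℝ) ≤ sst n := by exact_mod_cast h2
      have hm := hM0 n
      simp only [hrM, sub_neg_eq_add]
      rw [le_div_iff₀ h6]
      have e1 : (1 - 2 * (log (L n) / L n) - 1 / L n) * L n = L n - 2 * log (L n) - 1 := by
        field_simp
      rw [e1]
      have k1 : log (l n / L n) ≤ log ((sss n : ℝ) + 1 + M n) :=
        Real.log_le_log (by positivity) (by linarith)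
      have k2 : log (sst n + M n) ≤ log (L n * (M n + 1)) :=
        Real.log_le_log (by positivity) (by nlinarith)
      rw [Real.log_div h5.ne' h6.ne'] at k1
      rw [Real.log_mul h6.ne' (by positivity)] at k2
      have k3 := hL n
      rw [Real.log_div h5.ne' (by positivity)] at k3
      linarith
    · filter_upwards [hle, hs.eventually_ge_atTop 2, hSup, hMup, hl0,
        hLtop.eventually_gt_atTop 0] with n h1 h2 h3 h4 h5 h6
      have hb := (sum_bounds_nonpos (sst n) (sss n) (M n) (hM0 n) h2 h1).2
      have h2' : (2 : ℝ) ≤ sst n := by exact_mod_cast h2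
      have h2'' : (2 : ℝ) ≤ sss n := by exact_mod_cast h2.trans h1
      have hm := hM0 n
      simp only [hrM, sub_neg_eq_add]
      rw [div_le_one h6]
      have k1 : log ((sss n : ℝ) + M n) ≤ log (l n) :=
        Real.log_le_log (by positivity) (by linarith)
      have k2 : log (M n + 1) ≤ log (sst n + M n - 1) :=
        Real.log_le_log (by positivity) (by linarith)
      have k3 := hL n
      rw [Real.log_div h5.ne' (by positivity)] at k3
      linarith
  · have hrM : ∀ n, (r n : ℝ) = M n := fun n => by
      rw [← hM, abs_of_pos (hr0 n)]
    have hM1 : ∀ n, 1 ≤ M n := fun n => by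
      rw [← hrM]; exact_mod_cast hr0 n
    -- Replacing `|r| + 1` by `r` changes the logarithm by at most one.
    have hL' : ∀ᶠ n in atTop,
        L n ≤ log ((l n : ℝ) / M n) ∧ log ((l n : ℝ) / M n) ≤ L n + 1 := by
      filter_upwards [hl0] with n h1
      have hm := hM1 n
      have hm' : 0 < M n := by linarith
      have k1 := hL n
      rw [Real.log_div h1.ne' (by positivity)] at k1 ⊢
      have k2 := log_succ_sub_log_le (M n) hm'
      have k3 : 1 / M n ≤ 1 := by rw [div_le_one hm']; exact hm
      have k4 : log (M n) ≤ log (M n + 1) := Real.log_le_log hm' (by linarith)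
      constructor <;> linarith
    simp only [hrM] at hd hdL ⊢
    have hd1 : ∀ᶠ n in atTop, M n + 1 ≤ sst n := by
      filter_upwards [hdL.eventually_gt_atTop 0, hL', hLtop.eventually_gt_atTop 0] with n h1 h2 h3
      have hm := hM1 n
      have hLp : 0 < log ((l n : ℝ) / M n) := by linarith
      have : 0 < (sst n : ℝ) - M n := by
        by_contra hneg
        push Not at hneg
        have : ((sst n : ℝ) - M n) * log ((l n : ℝ) / M n) / M n ≤ 0 :=
          div_nonpos_of_nonpos_of_nonneg (mul_nonpos_of_nonpos_of_nonneg hneg hLp.le) (by linarith)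
        linarith
      rw [← hrM] at this ⊢
      have h4 : r n < (sst n : ℤ) := by
        have : (r n : ℝ) < ((sst n : ℤ) : ℝ) := by push_cast; linarith
        exact_mod_cast this
      have h5 : r n + 1 ≤ (sst n : ℤ) := h4
      exact_mod_cast h5
    have hd2 : ∀ᶠ n in atTop, (sst n : ℝ) ≤ 2 * M n := by
      filter_upwards [hd.eventually_le_const (show (0 : ℝ) < 1 by norm_num)] with n h1
      have hm := hM1 n
      rw [div_le_one (by linarith)] at h1
      linarith
    have hS2 : ∀ᶠ n in atTop, 2 * M n ≤ sss n := by
      filter_upwards [hSlow, hlexp, hsq, hLtop.eventually_ge_atTop 2] with n h2 h3 h4 h5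
      have hm := hM1 n
      refine le_trans ?_ h2
      rw [le_div_iff₀ (by linarith), h3]
      have : 2 * L n ≤ exp (L n) := by nlinarith
      nlinarith [exp_pos (L n)]
    have hle : ∀ᶠ n in atTop, sst n ≤ sss n := by
      filter_upwards [hd2, hS2] with n h1 h2
      exact_mod_cast h1.trans h2
    refine ⟨hle, ?_⟩
    -- `r / (s - r) = o(L)`: the correction term is negligible.
    have he := tendsto_inv_atTop_zero.comp hdL
    have hupper : Tendsto (fun n => 1 + 1 / L n +
        6 * (((sst n : ℝ) - M n) * log ((l n : ℝ) / M n) / M n)⁻¹) atTop (nhds 1) := by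
      simpa [Function.comp_def] using
        ((tendsto_const_nhds (x := (1 : ℝ))).add hinvL).add (he.const_mul 6)
    refine tendsto_of_tendsto_of_tendsto_of_le_of_le' hlower hupper ?_ ?_
    · filter_upwards [hle, hd1, hd2, hS2, hSlow, hl0, hL',
        hLtop.eventually_ge_atTop 2] with n h1 h2 h3 h4 h5 h6 h7 h8
      have hm := hM1 n
      have hm0 : 0 < M n := by linarith
      have hb := (sum_bounds_pos (sst n) (sss n) (M n) hm0 h2 h1).1
      have hL0 : 0 < L n := by linarith
      rw [le_div_iff₀ hL0]
      have e1 : (1 - 2 * (log (L n) / L n) - 1 / L n) * L n = L n - 2 * log (L n) - 1 := by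
        field_simp
      rw [e1]
      have k0 : l n / (L n * 2) ≤ (sss n : ℝ) + 1 - M n := by
        rw [← div_div]; linarith
      have k1 : log (l n / (L n * 2)) ≤ log ((sss n : ℝ) + 1 - M n) :=
        Real.log_le_log (by positivity) k0
      have k2 : log (sst n - M n) ≤ log (M n) :=
        Real.log_le_log (by linarith) (by linarith)
      rw [Real.log_div h6.ne' (by positivity), Real.log_mul hL0.ne' (by norm_num)] at k1
      have k3 := h7.1
      rw [Real.log_div h6.ne' hm0.ne'] at k3
      have k4 : log 2 ≤ log (L n) := Real.log_le_log (by norm_num) h8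
      linarith
    · filter_upwards [hle, hd1, hSup, hl0, hL',
        hLtop.eventually_ge_atTop 2] with n h1 h2 h3 h6 h7 h8
      have hm := hM1 n
      have hm0 : 0 < M n := by linarith
      have hb := (sum_bounds_pos (sst n) (sss n) (M n) hm0 h2 h1).2
      have hL0 : 0 < L n := by linarith
      have h1' : (sst n : ℝ) ≤ sss n := by exact_mod_cast h1
      rw [div_le_iff₀ hL0]
      obtain ⟨d, hdd⟩ : ∃ d : ℝ, (sst n : ℝ) - M n = d := ⟨_, rfl⟩
      obtain ⟨Q, hQ⟩ : ∃ Q : ℝ, log ((l n : ℝ) / M n) = Q := ⟨_, rfl⟩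
      have hd0 : 0 < d := by linarith
      rw [hdd] at hb
      rw [hQ] at h7
      rw [hdd, hQ]
      have hQ0 : 0 < Q := by linarith
      have k1 : log ((sss n : ℝ) + 1 - M n) ≤ log (l n) :=
        Real.log_le_log (by linarith) (by linarith)
      have k2 : log (M n) - log d ≤ M n / d := by
        rw [← Real.log_div hm0.ne' hd0.ne']
        exact Real.log_le_self (by positivity)
      have k3 := hQ
      rw [Real.log_div h6.ne' hm0.ne'] at k3
      have k4 : (1 + M n) / d ≤ 2 * (M n / d) := by
        rw [← mul_div_assoc]; gcongr; linarith
      have k5 : M n / d = (d * Q / M n)⁻¹ * Q := by field_simp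
      have k6 : (d * Q / M n)⁻¹ * Q ≤ (d * Q / M n)⁻¹ * (2 * L n) := by
        gcongr; linarith
      have e1 : (1 + 1 / L n + 6 * (d * Q / M n)⁻¹) * L n
          = L n + 1 + 3 * ((d * Q / M n)⁻¹ * (2 * L n)) := by
        rw [add_mul, add_mul, one_div, inv_mul_cancel₀ hL0.ne']; ring
      rw [e1]
      linarith
end
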